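/- Let $U$ be a convex subset of a real normed space with $\|u-u'\|\le R$ for all $u,u'\in U$, let $L\ge 0$, let $F:U\to\mathbb{R}$ be convex and $L$-Lipschitz on $U$ (that is, $|F(u)-F(v)|\le L\|u-v\|$ for all $u,v\in U$), and let $G:U\to\mathbb{R}$ be convex. Suppose Slater's condition holds: there exist $u_0\in U$ and $\delta>0$ with $G(u_0)\le-\delta$. Fix $\varepsilon$ with $0<\varepsilon<\delta$. If $u^*$ minimizes $F$ over $\{u\in U: G(u)\le 0\}$ and $u^{*,\varepsilon}$ minimizes $F$ over $\{u\in U: G(u)\le\varepsilon\}$, then $F(u^*)-F(u^{*,\varepsilon})\le LR\varepsilon/\delta$. -/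

import Mathlib

/-- Comparison of the original constrained problem with the
`ε`-relaxed problem: if `u*` minimizes the convex `L`-Lipschitz `F` (`L ≥ 0`) over
`{u ∈ U : G u ≤ 0}` and `u^{*,ε}` minimizes `F` over `{u ∈ U : G u ≤ ε}`,
with Slater point `G u₀ ≤ -δ` and `0 < ε < δ`, and `U` has diameter at most `R`, then
`F u* - F u^{*,ε} ≤ L R ε / δ`. -/
theorem stmt1 {E : Type*} [NormedAddCommGroup E] [NormedSpace ℝ E]
    (U : Set E) (hU : Convex ℝ U) (R : ℝ)
    (hR : ∀ u ∈ U, ∀ u' ∈ U, ‖u - u'‖ ≤ R)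
    (F G : E → ℝ) (hF : ConvexOn ℝ U F) (L : ℝ) (hL0 : 0 ≤ L)
    (hL : ∀ u ∈ U, ∀ v ∈ U, |F u - F v| ≤ L * ‖u - v‖)
    (hG : ConvexOn ℝ U G)
    (u₀ : E) (hu₀ : u₀ ∈ U) (δ : ℝ) (hδ : 0 < δ) (hslater : G u₀ ≤ -δ)
    (ε : ℝ) (hε : 0 < ε) (hεδ : ε < δ)
    (ustar : E) (hustar : ustar ∈ U) (hGstar : G ustar ≤ 0)
    (hmin : ∀ u ∈ U, G u ≤ 0 → F ustar ≤ F u)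
    (ueps : E) (hueps : ueps ∈ U) (hGeps : G ueps ≤ ε)
    (hmineps : ∀ u ∈ U, G u ≤ ε → F ueps ≤ F u) :
    F ustar - F ueps ≤ L * R * ε / δ := by
  set t := ε / δ with ht
  have ht0 : 0 ≤ t := by positivity
  have ht1 : 0 ≤ 1 - t := sub_nonneg.2 ((div_le_one hδ).2 hεδ.le)
  have htδ : t * δ = ε := div_mul_cancel₀ ε hδ.ne'
  have hsum : 1 - t + t = 1 := by ring
  set v := (1 - t) • ueps + t • u₀ with hv
  have hvU : v ∈ U := hU hueps hu₀ ht1 ht0 hsum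
  have hGv : G v ≤ 0 := by
    have h : G v ≤ (1 - t) * G ueps + t * G u₀ := hG.2 hueps hu₀ ht1 ht0 hsum
    have h1 := mul_le_mul_of_nonneg_left hGeps ht1
    have h2 := mul_le_mul_of_nonneg_left hslater ht0
    have h3 := mul_nonneg ht0 hε.le
    linarith
  have hnorm : ‖v - ueps‖ ≤ t * R := by
    have h : v - ueps = t • (u₀ - ueps) := by rw [hv]; module
    rw [h, norm_smul, Real.norm_of_nonneg ht0]
    exact mul_le_mul_of_nonneg_left (hR u₀ hu₀ ueps hueps) ht0
  calc F ustar - F ueps ≤ F v - F ueps := sub_le_sub_right (hmin v hvU hGv) _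
    _ ≤ L * ‖v - ueps‖ := (le_abs_self _).trans (hL v hvU ueps hueps)
    _ ≤ L * (t * R) := mul_le_mul_of_nonneg_left hnorm hL0
    _ = L * R * ε / δ := by rw [ht]; ring
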